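/- Let Γ be a generalised hexagon of finite order (s,t) with s > 1 and t > 1, and let S be a set of s+1 points of Γ such that no point of Γ is opposite every member of S. Suppose p0, p1 ∈ S are distinct and non-collinear, x is a point collinear to both p0 and p1, and x ∉ S. Then every line of Γ through x contains at least one point of S. -/

import Mathlib

/-- An incidence structure of points and lines, each line being a set of points. -/
structure GenHexagon where
  Point : Type
  Line : Type
  pts : Line → Set Point

namespace GenHexagon

variable (Γ : GenHexagon)

/-- Adjacency of the bipartite incidence graph on the disjoint union of points and lines:
a point is adjacent to a line iff the point lies on the line. -/
def incAdj : Γ.Point ⊕ Γ.Line → Γ.Point ⊕ Γ.Line → Prop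
  | Sum.inl x, Sum.inr L => x ∈ Γ.pts L
  | Sum.inr L, Sum.inl x => x ∈ Γ.pts L
  | _, _ => False

/-- The bipartite incidence graph. -/
def incGraph : SimpleGraph (Γ.Point ⊕ Γ.Line) where
  Adj := Γ.incAdj
  symm := ⟨by rintro (x | L) (y | M) h <;> simp_all [incAdj]⟩
  loopless := ⟨by rintro (x | L) h <;> simp_all [incAdj]⟩

/-- `Γ` is a generalised hexagon: its incidence graph has diameter `6` and girth `12`. -/
def IsGenHexagon : Prop :=
  Γ.incGraph.ediam = 6 ∧ Γ.incGraph.egirth = 12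

/-- Two points are collinear if they are distinct and some line contains both. -/
def Collinear (x y : Γ.Point) : Prop :=
  x ≠ y ∧ ∃ L, x ∈ Γ.pts L ∧ y ∈ Γ.pts L

/-- Two points are special if they are distinct, non-collinear, and collinear
to a common point. -/
def Special (x y : Γ.Point) : Prop :=
  x ≠ y ∧ ¬ Γ.Collinear x y ∧ ∃ z, Γ.Collinear x z ∧ Γ.Collinear y z

/-- Two points are opposite if they are distinct, non-collinear and non-special. -/
def Opposite (x y : Γ.Point) : Prop :=
  x ≠ y ∧ ¬ Γ.Collinear x y ∧ ¬ Γ.Special x y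

/-- `Γ` has order `(s, t)`: every line contains exactly `s + 1` points and every
point lies on exactly `t + 1` lines. -/
def HasOrder (s t : ℕ) : Prop :=
  (∀ L, (Γ.pts L).encard = s + 1) ∧ (∀ x, {L | x ∈ Γ.pts L}.encard = t + 1)

/-- `Γ` is thick: every line contains at least `3` points and every point lies on
at least `3` lines. -/
def Thick : Prop :=
  (∀ L, 3 ≤ (Γ.pts L).encard) ∧ (∀ x, 3 ≤ {L | x ∈ Γ.pts L}.encard)

/-- A point is close to a line if it is collinear to exactly one point of that line. -/
def CloseTo (x : Γ.Point) (L : Γ.Line) : Prop :=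
  ∃! y, y ∈ Γ.pts L ∧ Γ.Collinear x y

/-- Two lines are opposite if they are disjoint and no point of one is collinear to
a point of the other. -/
def OppLines (L M : Γ.Line) : Prop :=
  (∀ x ∈ Γ.pts L, x ∉ Γ.pts M) ∧
  (∀ x ∈ Γ.pts L, ∀ y ∈ Γ.pts M, ¬ Γ.Collinear x y)

/-- The distance-3 trace `[L,M]₃` of two (opposite) lines: the set of points close to
both `L` and `M`. -/
def trace3 (L M : Γ.Line) : Set Γ.Point :=
  {x | Γ.CloseTo x L ∧ Γ.CloseTo x M}

/-- The distance-3 trace `[L,M]₃` is regular if `[N,M]₃ = [L,M]₃` for every line `N`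
opposite `M` such that `[N,M]₃` and `[L,M]₃` share at least two points. -/
def RegularTrace3 (L M : Γ.Line) : Prop :=
  ∀ N, Γ.OppLines N M → (Γ.trace3 N M ∩ Γ.trace3 L M).Nontrivial →
    Γ.trace3 N M = Γ.trace3 L M

/-- A hyperbolic line: a set `H` of pairwise special points, all collinear to a common
point `p`, such that for every point `q` opposite `p` to which at least two points of `H`
are special, the set of points special to `q` and collinear to `p` equals `H`. -/
def IsHyperbolicLine (H : Set Γ.Point) : Prop :=
  (∀ x ∈ H, ∀ y ∈ H, x ≠ y → Γ.Special x y) ∧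
  ∃ p, (∀ x ∈ H, Γ.Collinear x p) ∧
    ∀ q, Γ.Opposite q p → {x ∈ H | Γ.Special q x}.Nontrivial →
      {x | Γ.Special q x ∧ Γ.Collinear x p} = H

/-- A round-up triple: no point of `Γ` is opposite exactly one of `x₁, x₂, x₃`. -/
def RoundUpTriple (x₁ x₂ x₃ : Γ.Point) : Prop :=
  ∀ y : Γ.Point,
    ¬ ((Γ.Opposite y x₁ ∧ ¬ Γ.Opposite y x₂ ∧ ¬ Γ.Opposite y x₃) ∨
       (¬ Γ.Opposite y x₁ ∧ Γ.Opposite y x₂ ∧ ¬ Γ.Opposite y x₃) ∨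
       (¬ Γ.Opposite y x₁ ∧ ¬ Γ.Opposite y x₂ ∧ Γ.Opposite y x₃))

/-- A geometric line: a set `T` of points such that each point of `Γ` is either opposite
no member of `T`, or non-opposite to exactly one member of `T`. -/
def IsGeometricLine (T : Set Γ.Point) : Prop :=
  ∀ y : Γ.Point, (∀ x ∈ T, ¬ Γ.Opposite y x) ∨ (∃! x, x ∈ T ∧ ¬ Γ.Opposite y x)

end GenHexagon

open SimpleGraph

/-- Two paths with the same ends whose total length is less than the girth coincide. -/
theorem SimpleGraph.Walk.IsPath.eq_of_length_add_lt_egirth {V : Type*} {G : SimpleGraph V}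
    {u v : V} {p q : G.Walk u v} (hp : p.IsPath) (hq : q.IsPath)
    (h : ((p.length + q.length : ℕ) : ℕ∞) < G.egirth) : p = q := by
  classical
  set H : SimpleGraph V := fromEdgeSet {e | e ∈ p.edges ++ q.edges} with hH
  have hmem : ∀ e ∈ H.edgeSet, e ∈ p.edges ++ q.edges := by
    intro e he
    rw [hH, edgeSet_fromEdgeSet] at he
    exact he.1
  have hle : H ≤ G := by
    intro a b hab
    rcases List.mem_append.1 (hmem s(a, b) hab) with h | h
    exacts [p.adj_of_mem_edges h, q.adj_of_mem_edges h]
  have hacyc : H.IsAcyclic := by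
    intro a c hc
    have h₁ : G.egirth ≤ ((c.mapLe hle).length : ℕ∞) :=
      egirth_le_length ((Walk.isCycle_mapLe hle).2 hc)
    have h₂ : c.edges.length ≤ (p.edges ++ q.edges).length :=
      (hc.edges_nodup.subperm fun e he ↦ hmem e (c.edges_subset_edgeSet he)).length_le
    simp only [List.length_append, Walk.length_edges] at h₂
    have h₃ := h.trans_le h₁
    simp only [Walk.length_map, Nat.cast_lt] at h₃
    omega
  have hpH : ∀ e ∈ p.edges, e ∈ H.edgeSet := by
    intro e he
    rw [hH, edgeSet_fromEdgeSet]
    exact ⟨List.mem_append_left _ he, G.not_isDiag_of_mem_edgeSet (p.edges_subset_edgeSet he)⟩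
  have hqH : ∀ e ∈ q.edges, e ∈ H.edgeSet := by
    intro e he
    rw [hH, edgeSet_fromEdgeSet]
    exact ⟨List.mem_append_right _ he, G.not_isDiag_of_mem_edgeSet (q.edges_subset_edgeSet he)⟩
  have key := (hacyc.subsingleton_path u v).elim ⟨p.transfer H hpH, hp.transfer hpH⟩
    ⟨q.transfer H hqH, hq.transfer hqH⟩
  have hsupp := congrArg (fun r : H.Path u v ↦ r.1.support) key
  simp only [Walk.support_transfer] at hsupp
  exact Walk.ext_support hsupp

/-- In a connected graph, a vertex `v` with `2 * dist u v` less than the girth has at most one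
neighbour closer to `u`. -/
theorem SimpleGraph.Connected.eq_of_adj_of_dist_lt {V : Type*} {G : SimpleGraph V}
    (hG : G.Connected) {u v w w' : V} (hv : ((2 * G.dist u v : ℕ) : ℕ∞) < G.egirth)
    (hw : G.Adj w v) (hw' : G.Adj w' v) (hd : G.dist u w < G.dist u v)
    (hd' : G.dist u w' < G.dist u v) : w = w' := by
  have path : ∀ a, ∀ ha : G.Adj a v, G.dist u a < G.dist u v →
      ∃ p : G.Walk u a, (p.concat ha).IsPath ∧ p.length = G.dist u a := by
    intro a ha hda
    obtain ⟨p, hp, hlen⟩ := hG.exists_path_of_dist u a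
    refine ⟨p, hp.concat ?_ ha, hlen⟩
    intro hmem
    classical
    have h₁ := dist_le (p.takeUntil v hmem)
    have h₂ := p.length_takeUntil_le_length hmem
    omega
  obtain ⟨p, hp, hpl⟩ := path w hw hd
  obtain ⟨q, hq, hql⟩ := path w' hw' hd'
  have key := hp.eq_of_length_add_lt_egirth hq (lt_of_le_of_lt (by
    rw [Nat.cast_le, Walk.length_concat, Walk.length_concat]
    omega) hv)
  simpa using congrArg Walk.penultimate key

/-- A map from `S` to a set of the same finite size that identifies two points of `S` misses some
point. -/
theorem Set.exists_notMem_image_of_encard_eq {α β : Type*} {S : Set α} {T : Set β} {n : ℕ}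
    (hS : S.encard = n + 1) (hT : T.encard = n + 1) (f : α → β) {a b : α} (ha : a ∈ S)
    (hb : b ∈ S) (hab : a ≠ b) (hf : f a = f b) : ∃ y ∈ T, ∀ p ∈ S, f p ≠ y := by
  by_contra! hcon
  have hsub : T ⊆ f '' (S \ {b}) := by
    intro y hy
    obtain ⟨p, hp, rfl⟩ := hcon y hy
    by_cases hpb : p = b
    · exact ⟨a, ⟨ha, hab⟩, hpb ▸ hf⟩
    · exact ⟨p, ⟨hp, hpb⟩, rfl⟩
  have h₁ := (Set.encard_le_encard hsub).trans (Set.encard_image_le f _)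
  have h₂ := Set.encard_sdiff_singleton_add_one hb
  rw [hS] at h₂
  rw [hT] at h₁
  have h₃ : (S \ {b}).encard = n := by
    exact WithTop.add_right_cancel ENat.one_ne_top h₂
  rw [h₃] at h₁
  exact absurd h₁ (by exact_mod_cast Nat.not_succ_le_self n)

namespace GenHexagon

variable {Γ : GenHexagon}

theorem incGraph_adj_inl_inr {p : Γ.Point} {L : Γ.Line} :
    Γ.incGraph.Adj (Sum.inl p) (Sum.inr L) ↔ p ∈ Γ.pts L := Iff.rfl

/-- The two-colouring of the incidence graph by points and lines. -/
def incColoring (Γ : GenHexagon) : Γ.incGraph.Coloring Bool :=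
  Coloring.mk Sum.isLeft (by
    rintro (x | L) (y | M) h <;> simp_all [incGraph, incAdj])

theorem IsGenHexagon.edist_le (hΓ : Γ.IsGenHexagon) (a b : Γ.Point ⊕ Γ.Line) :
    Γ.incGraph.edist a b ≤ 6 := hΓ.1 ▸ edist_le_ediam

theorem IsGenHexagon.connected (hΓ : Γ.IsGenHexagon) (p : Γ.Point) :
    Γ.incGraph.Connected :=
  have : Nonempty (Γ.Point ⊕ Γ.Line) := ⟨Sum.inl p⟩
  ⟨fun a b ↦ edist_ne_top_iff_reachable.1
    (ne_top_of_le_ne_top (by decide) (hΓ.edist_le a b))⟩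

theorem IsGenHexagon.dist_le_six (hΓ : Γ.IsGenHexagon) (p : Γ.Point) (a b : Γ.Point ⊕ Γ.Line) :
    Γ.incGraph.dist a b ≤ 6 := by
  have h := hΓ.edist_le a b
  rw [← ((hΓ.connected p) a b).coe_dist_eq_edist] at h
  exact_mod_cast h

theorem IsGenHexagon.even_dist_points (hΓ : Γ.IsGenHexagon) (p q : Γ.Point) :
    Even (Γ.incGraph.dist (Sum.inl p) (Sum.inl q)) := by
  obtain ⟨w, hw⟩ := (hΓ.connected p).exists_walk_length_eq_dist (Sum.inl p) (Sum.inl q)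
  rw [← hw, Γ.incColoring.even_length_iff_congr w]
  exact Iff.rfl

theorem IsGenHexagon.odd_dist_point_line (hΓ : Γ.IsGenHexagon) (p : Γ.Point) (L : Γ.Line) :
    Odd (Γ.incGraph.dist (Sum.inl p) (Sum.inr L)) := by
  obtain ⟨w, hw⟩ := (hΓ.connected p).exists_walk_length_eq_dist (Sum.inl p) (Sum.inr L)
  rw [← hw, Γ.incColoring.odd_length_iff_not_congr w]
  change (¬ true = true) ↔ false = true
  decide

theorem IsGenHexagon.dist_line_le_five (hΓ : Γ.IsGenHexagon) (p : Γ.Point) (L : Γ.Line) :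
    Γ.incGraph.dist (Sum.inl p) (Sum.inr L) ≤ 5 := by
  have h₁ := hΓ.dist_le_six p (Sum.inl p) (Sum.inr L)
  obtain ⟨k, hk⟩ := hΓ.odd_dist_point_line p L
  omega

/-- The distances from a point to the two ends of a flag differ by one. -/
theorem IsGenHexagon.dist_flag (hΓ : Γ.IsGenHexagon) (p : Γ.Point) {y : Γ.Point} {L : Γ.Line}
    (hy : y ∈ Γ.pts L) :
    Γ.incGraph.dist (Sum.inl p) (Sum.inl y) + 1 = Γ.incGraph.dist (Sum.inl p) (Sum.inr L) ∨
    Γ.incGraph.dist (Sum.inl p) (Sum.inl y) = Γ.incGraph.dist (Sum.inl p) (Sum.inr L) + 1 := by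
  have h₁ := (incGraph_adj_inl_inr.2 hy).diff_dist_adj (u := Sum.inl p)
  obtain ⟨k, hk⟩ := hΓ.odd_dist_point_line p L
  obtain ⟨m, hm⟩ := hΓ.even_dist_points p y
  omega

/-- A line has at most one point nearest to a given point. -/
theorem IsGenHexagon.proj_unique (hΓ : Γ.IsGenHexagon) {p y z : Γ.Point} {L : Γ.Line}
    (hy : y ∈ Γ.pts L) (hz : z ∈ Γ.pts L)
    (hdy : Γ.incGraph.dist (Sum.inl p) (Sum.inl y) < Γ.incGraph.dist (Sum.inl p) (Sum.inr L))
    (hdz : Γ.incGraph.dist (Sum.inl p) (Sum.inl z) < Γ.incGraph.dist (Sum.inl p) (Sum.inr L)) :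
    y = z := by
  refine Sum.inl_injective ((hΓ.connected p).eq_of_adj_of_dist_lt ?_
    (incGraph_adj_inl_inr.2 hy) (incGraph_adj_inl_inr.2 hz) hdy hdz)
  have h := hΓ.dist_line_le_five p L
  rw [hΓ.2]
  exact_mod_cast (by omega : _ < 12)

/-- At most one line through a point not at maximal distance from `p` is nearer to `p`. -/
theorem IsGenHexagon.line_unique (hΓ : Γ.IsGenHexagon) {p y : Γ.Point} {L M : Γ.Line}
    (hL : y ∈ Γ.pts L) (hM : y ∈ Γ.pts M)
    (hy : Γ.incGraph.dist (Sum.inl p) (Sum.inl y) < 6)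
    (hdL : Γ.incGraph.dist (Sum.inl p) (Sum.inr L) < Γ.incGraph.dist (Sum.inl p) (Sum.inl y))
    (hdM : Γ.incGraph.dist (Sum.inl p) (Sum.inr M) < Γ.incGraph.dist (Sum.inl p) (Sum.inl y)) :
    L = M := by
  refine Sum.inr_injective ((hΓ.connected p).eq_of_adj_of_dist_lt ?_
    (incGraph_adj_inl_inr.2 hL).symm (incGraph_adj_inl_inr.2 hM).symm hdL hdM)
  rw [hΓ.2]
  exact_mod_cast (by omega : _ < 12)

/-- Every line has a point nearest to a given point. -/
theorem IsGenHexagon.exists_proj (hΓ : Γ.IsGenHexagon) (L : Γ.Line) (p : Γ.Point) :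
    ∃ y ∈ Γ.pts L,
      Γ.incGraph.dist (Sum.inl p) (Sum.inl y) < Γ.incGraph.dist (Sum.inl p) (Sum.inr L) := by
  obtain ⟨w, hw⟩ := (hΓ.connected p).exists_walk_length_eq_dist (Sum.inl p) (Sum.inr L)
  have hnil : ¬ w.Nil := w.not_nil_of_ne (by simp)
  have hadj := w.adj_penultimate hnil
  have hd : Γ.incGraph.dist (Sum.inl p) w.penultimate < w.length :=
    (dist_le w.dropLast).trans_lt (by have := w.length_dropLast_add_one hnil; omega)
  generalize w.penultimate = a at hadj hd
  rcases a with y | M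
  · exact ⟨y, hadj, hw ▸ hd⟩
  · exact hadj.elim

theorem dist_eq_one_iff_mem {p : Γ.Point} {L : Γ.Line} :
    Γ.incGraph.dist (Sum.inl p) (Sum.inr L) = 1 ↔ p ∈ Γ.pts L := by
  rw [dist_eq_one_iff_adj, incGraph_adj_inl_inr]

theorem Collinear.symm {x y : Γ.Point} (h : Γ.Collinear x y) : Γ.Collinear y x :=
  ⟨h.1.symm, let ⟨L, hx, hy⟩ := h.2; ⟨L, hy, hx⟩⟩

theorem Collinear.dist_le_two {x y : Γ.Point} (h : Γ.Collinear x y) :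
    Γ.incGraph.dist (Sum.inl x) (Sum.inl y) ≤ 2 := by
  obtain ⟨-, L, hx, hy⟩ := h
  exact dist_le (Walk.cons (incGraph_adj_inl_inr.2 hx)
    (Walk.cons (incGraph_adj_inl_inr.2 hy).symm Walk.nil))

theorem IsGenHexagon.opposite_of_dist_eq_six (hΓ : Γ.IsGenHexagon) {x y : Γ.Point}
    (h : Γ.incGraph.dist (Sum.inl x) (Sum.inl y) = 6) : Γ.Opposite y x := by
  refine ⟨?_, fun hc ↦ ?_, ?_⟩
  · rintro rfl
    simp at h
  · have := hc.symm.dist_le_two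
    omega
  · rintro ⟨-, -, z, hyz, hxz⟩
    have h₁ := hxz.dist_le_two
    have h₂ := hyz.symm.dist_le_two
    have h₃ := (hΓ.connected x).dist_triangle
      (u := Sum.inl x) (v := Sum.inl z) (w := Sum.inl y)
    omega

/-- If `x ∈ L` is collinear to `p ∉ L`, then `p` is at distance three from `L`. -/
theorem IsGenHexagon.dist_eq_three (hΓ : Γ.IsGenHexagon) {p x : Γ.Point} {L : Γ.Line}
    (hx : x ∈ Γ.pts L) (hc : Γ.Collinear p x) (hp : p ∉ Γ.pts L) :
    Γ.incGraph.dist (Sum.inl p) (Sum.inr L) = 3 := by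
  have h₁ := hc.dist_le_two
  have h₂ := hΓ.dist_flag p hx
  have h₃ := mt dist_eq_one_iff_mem.1 hp
  obtain ⟨k, hk⟩ := hΓ.odd_dist_point_line p L
  omega

/-- If `y` is not the projection of `p ∉ L` onto `L`, then any other line through `y` is at
distance five from `p`. -/
theorem IsGenHexagon.dist_eq_five (hΓ : Γ.IsGenHexagon) {p y : Γ.Point} {L M : Γ.Line}
    (hyL : y ∈ Γ.pts L) (hyM : y ∈ Γ.pts M) (hML : M ≠ L) (hp : p ∉ Γ.pts L)
    (hy : Γ.incGraph.dist (Sum.inl p) (Sum.inl y) =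
      Γ.incGraph.dist (Sum.inl p) (Sum.inr L) + 1) :
    Γ.incGraph.dist (Sum.inl p) (Sum.inr M) = 5 := by
  have h₁ := mt dist_eq_one_iff_mem.1 hp
  obtain ⟨k, hk⟩ := hΓ.odd_dist_point_line p L
  have h₂ := hΓ.dist_line_le_five p M
  have h₃ := hΓ.dist_flag p hyM
  by_contra h
  exact hML (hΓ.line_unique hyM hyL (p := p) (by omega) (by omega) (by omega))

end GenHexagon

/-- Claim 1 in the proof: if `p₀, p₁ ∈ S` are distinct and non-collinear, `x ∉ S` is
collinear to both, then every line through `x` contains a point of `S`. -/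
theorem claim1_lines_through_common_neighbour (Γ : GenHexagon) (hΓ : Γ.IsGenHexagon)
    (s t : ℕ) (hs : 1 < s) (ht : 1 < t) (hord : Γ.HasOrder s t)
    (S : Set Γ.Point) (hS : S.encard = s + 1)
    (hblock : ¬ ∃ y : Γ.Point, ∀ x ∈ S, Γ.Opposite y x)
    (p₀ p₁ : Γ.Point) (hp₀ : p₀ ∈ S) (hp₁ : p₁ ∈ S) (hne : p₀ ≠ p₁)
    (hncol : ¬ Γ.Collinear p₀ p₁)
    (x : Γ.Point) (hx₀ : Γ.Collinear x p₀) (hx₁ : Γ.Collinear x p₁) (hxS : x ∉ S) :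
    ∀ L, x ∈ Γ.pts L → ∃ p ∈ S, p ∈ Γ.pts L := by
  intro L hxL
  by_contra! hL
  choose f hfmem hfdist using hΓ.exists_proj
  have hfar : ∀ M p, ∀ y ∈ Γ.pts M, f M p ≠ y →
      Γ.incGraph.dist (Sum.inl p) (Sum.inl y) =
        Γ.incGraph.dist (Sum.inl p) (Sum.inr M) + 1 := by
    intro M p y hy hne
    refine (hΓ.dist_flag p hy).resolve_left fun h ↦ hne ?_
    exact hΓ.proj_unique (hfmem M p) hy (hfdist M p) (by omega)
  have hfL : ∀ p ∈ S, Γ.Collinear x p → f L p = x := by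
    intro p hp hc
    refine hΓ.proj_unique (hfmem L p) hxL (hfdist L p) ?_
    have h₁ := hc.symm.dist_le_two
    have h₂ := hΓ.dist_eq_three hxL hc.symm (hL p hp)
    omega
  obtain ⟨y, hyL, hy⟩ := Set.exists_notMem_image_of_encard_eq hS (hord.1 L) (f L) hp₀ hp₁ hne
    ((hfL p₀ hp₀ hx₀).trans (hfL p₁ hp₁ hx₁).symm)
  obtain ⟨M, hyM, hML⟩ : ∃ M ∈ {M | y ∈ Γ.pts M}, M ≠ L := by
    refine Set.exists_ne_of_one_lt_encard ?_ L
    rw [hord.2 y]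
    exact_mod_cast (by omega : 1 < t + 1)
  have hM : ∀ p ∈ S, Γ.incGraph.dist (Sum.inl p) (Sum.inr M) = 5 := fun p hp ↦
    hΓ.dist_eq_five hyL hyM hML (hL p hp) (hfar L p y hyL (hy p hp))
  have hfM : ∀ p ∈ S, Γ.Collinear x p → f M p = y := by
    intro p hp hc
    refine hΓ.proj_unique (hfmem M p) hyM (hfdist M p) ?_
    have h₁ := hfar L p y hyL (hy p hp)
    have h₂ := hΓ.dist_eq_three hxL hc.symm (hL p hp)
    have h₃ := hM p hp
    omega
  obtain ⟨z, hzM, hz⟩ := Set.exists_notMem_image_of_encard_eq hS (hord.1 M) (f M) hp₀ hp₁ hne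
    ((hfM p₀ hp₀ hx₀).trans (hfM p₁ hp₁ hx₁).symm)
  refine hblock ⟨z, fun p hp ↦ hΓ.opposite_of_dist_eq_six ?_⟩
  rw [hfar M p z hzM (hz p hp), hM p hp]
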